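/- arXiv:2304.09036 — 2 statements merged into one kernel-verified Lean document; each statement's English description precedes it below -/
import Mathlib

section
/- Let f : ℝ^d → ℝ^d be of class C^{k+1} with all derivatives up to order k+1 bounded, k ≥ 1, and let φ_t^f be its flow. Define f^{[1]}(y) = (1/2) df(y)·f(y), f^{[j]}(y) = (1/(j+1)) df^{[j−1]}(y)·f(y) for 2 ≤ j ≤ k−1, and f̃_h^k = f + Σ_{j=1}^{k−1} h^j f^{[j]}. Fix T > 0 and a compact set K ⊂ ℝ^d. Then there exist C > 0 and h₀ > 0 such that for all 0 < h ≤ h₀ with Nh = T, N ∈ ℕ, and all y₀ ∈ K whose exact trajectory {φ_t^f(y₀) : t ∈ [0,T]} stays in K, the 'modified Euler' iterates y_0 = y₀, y_{n+1} = y_n + h f̃_h^k(y_n) satisfy max_{0 ≤ n ≤ N} |y_n − φ_{nh}^f(y₀)| ≤ C h^k; i.e., forward Euler applied to the truncated modified field is a method of order k. -/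
/-- The coefficient fields of the modified equation for the forward Euler
method: `f^[0] = f`, `f^[1] = (1/2) df·f`, `f^[j] = (1/(j+1)) df^[j−1]·f`. -/
noncomputable def eulerModCoeff {E : Type*} [NormedAddCommGroup E] [NormedSpace ℝ E]
    (f : E → E) : ℕ → E → E
  | 0 => f
  | j + 1 => fun y => ((j : ℝ) + 2)⁻¹ • fderiv ℝ (eulerModCoeff f j) y (f y)

/-!
Along a solution `u` of `u' = f(u)` the chain rule gives `u^(j+1) = (j+1)! f^[j](u)`, so one step
of the modified Euler method is exactly the Taylor polynomial of degree `k` of the solution, and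
the local error is `O(h^(k+1))` because `f^[k]` is bounded. The increment function is Lipschitz
uniformly in bounded `h`, since `f^[0], …, f^[k-1]` have bounded derivatives, and the discrete
Grönwall inequality turns `n ≤ T / h` local errors into a global error `O(h^k)`.
-/

open Set (EqOn Icc)
open Finset (range)
open scoped NNReal

section BoundedDerivatives

variable {E F G : Type*} [NormedAddCommGroup E] [NormedSpace ℝ E] [NormedAddCommGroup F]
  [NormedSpace ℝ F] [NormedAddCommGroup G] [NormedSpace ℝ G] {m n : ℕ}

/-- The class `C_b^n`: maps of class `C^n` all of whose derivatives of order at most `n`,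
including the map itself, are bounded on the whole space. -/
structure ContDiffBounded (n : ℕ) (g : E → F) : Prop where
  contDiff : ContDiff ℝ n g
  exists_bound : ∀ i ≤ n, ∃ M : ℝ, ∀ y, ‖iteratedFDeriv ℝ i g y‖ ≤ M

namespace ContDiffBounded

theorem of_le {g : E → F} (hg : ContDiffBounded n g) (hmn : m ≤ n) : ContDiffBounded m g where
  contDiff := hg.contDiff.of_le (mod_cast hmn)
  exists_bound i hi := hg.exists_bound i (hi.trans hmn)

theorem const_smul {g : E → F} (hg : ContDiffBounded n g) (c : ℝ) :
    ContDiffBounded n (fun y ↦ c • g y) where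
  contDiff := hg.contDiff.const_smul c
  exists_bound i hi := by
    obtain ⟨M, hM⟩ := hg.exists_bound i hi
    refine ⟨‖c‖ * M, fun y ↦ ?_⟩
    have hgi : ContDiffAt ℝ i g y := (hg.contDiff.of_le (mod_cast hi)).contDiffAt
    rw [iteratedFDeriv_const_smul_apply' hgi, norm_smul]
    gcongr
    exact hM y

theorem fderiv {g : E → F} (hg : ContDiffBounded (n + 1) g) :
    ContDiffBounded n (fderiv ℝ g) where
  contDiff := hg.contDiff.fderiv_right (by norm_cast)
  exists_bound i hi := by
    simpa only [norm_iteratedFDeriv_fderiv] using hg.exists_bound (i + 1) (by lia)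

theorem clm_apply {A : E → F →L[ℝ] G} {g : E → F} (hA : ContDiffBounded n A)
    (hg : ContDiffBounded n g) : ContDiffBounded n (fun y ↦ A y (g y)) where
  contDiff := hA.contDiff.clm_apply hg.contDiff
  exists_bound i hi := by
    choose! a ha using hA.exists_bound
    choose! b hb using hg.exists_bound
    refine ⟨∑ j ∈ range (i + 1), (i.choose j : ℝ) * a j * b (i - j), fun y ↦ ?_⟩
    refine (norm_iteratedFDeriv_clm_apply hA.contDiff hg.contDiff y (mod_cast hi)).trans
      (Finset.sum_le_sum fun j hj ↦ ?_)
    have hji : j < i + 1 := Finset.mem_range.1 hj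
    have hAj := ha j (by lia) y
    have hgj := hb (i - j) (by lia) y
    have haj : 0 ≤ a j := (norm_nonneg _).trans hAj
    gcongr

theorem exists_norm_le {g : E → F} (hg : ContDiffBounded n g) : ∃ M : ℝ, ∀ y, ‖g y‖ ≤ M := by
  simpa only [norm_iteratedFDeriv_zero] using hg.exists_bound 0 n.zero_le

theorem exists_lipschitzWith {g : E → F} (hg : ContDiffBounded 1 g) :
    ∃ L : ℝ≥0, LipschitzWith L g := by
  obtain ⟨M, hM⟩ := hg.exists_bound 1 le_rfl
  simp only [norm_iteratedFDeriv_one] at hM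
  exact ⟨M.toNNReal, lipschitzWith_of_nnnorm_fderiv_le (hg.contDiff.differentiable one_ne_zero)
    fun y ↦ NNReal.le_toNNReal_of_coe_le (hM y)⟩

end ContDiffBounded

end BoundedDerivatives

section OneStepMethods

variable {E : Type*} [NormedAddCommGroup E] [NormedSpace ℝ E]

theorem norm_add_smul_sub_add_smul_le {Φ : E → E} {L : ℝ≥0} (hΦ : LipschitzWith L Φ) {h : ℝ}
    (hh : 0 ≤ h) (x y : E) :
    ‖(y + h • Φ y) - (x + h • Φ x)‖ ≤ (1 + h * L) * ‖y - x‖ :=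
  calc ‖(y + h • Φ y) - (x + h • Φ x)‖ = ‖(y - x) + h • (Φ y - Φ x)‖ := by
        congr 1; module
    _ ≤ ‖y - x‖ + h * ‖Φ y - Φ x‖ := by
        simpa only [norm_smul, Real.norm_of_nonneg hh] using norm_add_le (y - x) (h • (Φ y - Φ x))
    _ ≤ ‖y - x‖ + h * (L * ‖y - x‖) := by
        gcongr
        exact hΦ.norm_sub_le y x
    _ = (1 + h * L) * ‖y - x‖ := by ring

theorem norm_sub_le_of_oneStep_of_localError_le {Φ : E → E} {L : ℝ≥0} (hΦ : LipschitzWith L Φ)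
    {h ε : ℝ} (hh : 0 ≤ h) (hε : 0 ≤ ε) {x y : ℕ → E} {n : ℕ}
    (hy : ∀ m < n, y (m + 1) = y m + h • Φ (y m))
    (hx : ∀ m < n, ‖x (m + 1) - (x m + h • Φ (x m))‖ ≤ ε) :
    ‖y n - x n‖ ≤ (‖y 0 - x 0‖ + n * ε) * Real.exp (n * (h * L)) := by
  have hstep : ∀ m < n, ‖y (m + 1) - x (m + 1)‖ ≤ (1 + h * L) * ‖y m - x m‖ + ε := by
    intro m hm
    rw [hy m hm]
    exact (norm_sub_le_norm_sub_add_norm_sub _ (x m + h • Φ (x m)) _).trans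
      (add_le_add (norm_add_smul_sub_add_smul_le hΦ hh _ _)
        (norm_sub_rev (x (m + 1)) _ ▸ hx m hm))
  -- The library's Grönwall inequality wants the recursion for all `m`, so freeze the error at `n`.
  have hrec : ∀ m ≥ 0, ‖y (min (m + 1) n) - x (min (m + 1) n)‖ ≤
      (1 + h * L) * ‖y (min m n) - x (min m n)‖ + ε := by
    intro m _
    rcases lt_or_ge m n with hm | hm
    · simpa only [min_eq_left hm.le, min_eq_left (Nat.succ_le_of_lt hm)] using hstep m hm
    · rw [min_eq_right hm, min_eq_right (hm.trans m.le_succ)]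
      have : 0 ≤ h * L * ‖y n - x n‖ := by positivity
      linarith
  simpa using discrete_gronwall (u := fun m ↦ ‖y (min m n) - x (min m n)‖) (norm_nonneg _) hrec
    (fun _ _ ↦ by positivity) (fun _ _ ↦ hε) n.zero_le

end OneStepMethods

section ModifiedEuler

open scoped Nat

variable {E : Type*} [NormedAddCommGroup E] [NormedSpace ℝ E] {f : E → E} {u : ℝ → E}
  {s : Set ℝ} {k : ℕ}

/-- The truncated modified field `f̃_h^k = ∑_{j<k} h^j f^[j]`, the increment function of the
modified Euler method of order `k`. The field `f` itself is the summand `j = 0`. -/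
noncomputable def eulerModField (f : E → E) (k : ℕ) (h : ℝ) (y : E) : E :=
  ∑ j ∈ range k, h ^ j • eulerModCoeff f j y

theorem eulerModField_eq_add_sum_Icc (f : E → E) (hk : 1 ≤ k) (h : ℝ) (y : E) :
    eulerModField f k h y = f y + ∑ j ∈ Finset.Icc 1 (k - 1), h ^ j • eulerModCoeff f j y := by
  rw [eulerModField, Finset.range_eq_Ico, Finset.sum_eq_sum_Ico_succ_bot hk, pow_zero, one_smul,
    zero_add, Finset.Icc_sub_one_right_eq_Ico_of_not_isMin (not_isMin_of_lt hk), eulerModCoeff]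

theorem contDiff_eulerModCoeff {j n : ℕ} (hf : ContDiff ℝ (n + j : ℕ) f) :
    ContDiff ℝ n (eulerModCoeff f j) := by
  induction j generalizing n with
  | zero => exact hf
  | succ j ih =>
    have hcoeff : ContDiff ℝ (n + 1 : ℕ) (eulerModCoeff f j) := ih (by convert hf using 2; lia)
    have hfn : ContDiff ℝ n f := hf.of_le (by norm_cast; lia)
    exact ((hcoeff.fderiv_right (by norm_cast)).clm_apply hfn).const_smul _

theorem contDiffBounded_eulerModCoeff {j n : ℕ} (hf : ContDiffBounded (n + j) f) :
    ContDiffBounded n (eulerModCoeff f j) := by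
  induction j generalizing n with
  | zero => exact hf
  | succ j ih =>
    have hcoeff := ih (n := n + 1) (by convert hf using 1; lia)
    exact (hcoeff.fderiv.clm_apply (hf.of_le (by lia))).const_smul _

theorem ContDiffBounded.exists_lipschitzWith_eulerModField (hf : ContDiffBounded k f) (H : ℝ) :
    ∃ L : ℝ≥0, ∀ h ∈ Icc 0 H, LipschitzWith L (eulerModField f k h) := by
  have hcoeff : ∀ j < k, ∃ L : ℝ≥0, LipschitzWith L (eulerModCoeff f j) := fun j hj ↦
    (contDiffBounded_eulerModCoeff (hf.of_le (by lia))).exists_lipschitzWith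
  choose! L hL using hcoeff
  refine ⟨∑ j ∈ range k, H.toNNReal ^ j * L j, fun h hh ↦ .of_dist_le_mul fun x y ↦ ?_⟩
  rw [dist_eq_norm, dist_eq_norm, eulerModField, eulerModField, ← Finset.sum_sub_distrib,
    NNReal.coe_sum, Finset.sum_mul]
  refine norm_sum_le_of_le _ fun j hj ↦ ?_
  rw [← smul_sub, norm_smul, norm_pow, Real.norm_of_nonneg hh.1, NNReal.coe_mul, NNReal.coe_pow,
    mul_assoc]
  gcongr
  · exact hh.1
  · exact hh.2.trans H.le_coe_toNNReal
  · exact (hL j (Finset.mem_range.1 hj)).norm_sub_le x y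

theorem contDiffOn_succ_of_isIntegralCurveOn (hs : UniqueDiffOn ℝ s) (hf : ContDiff ℝ k f)
    (hu : IsIntegralCurveOn u (fun _ ↦ f) s) : ContDiffOn ℝ (k + 1) u s := by
  have hdiff : DifferentiableOn ℝ u s := fun t ht ↦ (hu t ht).differentiableWithinAt
  have hderiv : EqOn (derivWithin u s) (f ∘ u) s := fun t ht ↦ (hu t ht).derivWithin (hs t ht)
  have hgain {n : ℕ} (hfn : ContDiff ℝ n f) (hun : ContDiffOn ℝ n u s) :
      ContDiffOn ℝ (n + 1) u s :=
    (contDiffOn_succ_iff_derivWithin hs).2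
      ⟨hdiff, by simp, (hfn.comp_contDiffOn hun).congr hderiv⟩
  induction k with
  | zero => exact hgain hf (contDiffOn_zero.2 hu.continuousOn)
  | succ k ih => exact hgain hf (mod_cast ih (hf.of_le (by norm_cast; lia)))

theorem iteratedDerivWithin_succ_eq_factorial_smul_eulerModCoeff (hs : UniqueDiffOn ℝ s)
    (hu : IsIntegralCurveOn u (fun _ ↦ f) s) {j : ℕ} (hf : ContDiff ℝ j f) {t : ℝ} (ht : t ∈ s) :
    iteratedDerivWithin (j + 1) u s t = ((j + 1)! : ℝ) • eulerModCoeff f j (u t) := by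
  induction j generalizing t with
  | zero => simpa [eulerModCoeff] using (hu t ht).derivWithin (hs t ht)
  | succ j ih =>
    have hprev : EqOn (iteratedDerivWithin (j + 1) u s)
        (fun r ↦ ((j + 1)! : ℝ) • eulerModCoeff f j (u r)) s := fun r hr ↦
      ih (hf.of_le (by norm_cast; lia)) hr
    have hdiff : DifferentiableAt ℝ (eulerModCoeff f j) (u t) :=
      (contDiff_eulerModCoeff (n := 1) (by convert hf using 2; lia)).differentiable
        (by simp) (u t)
    have hderiv : HasDerivWithinAt (fun r ↦ ((j + 1)! : ℝ) • eulerModCoeff f j (u r))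
        (((j + 1)! : ℝ) • fderiv ℝ (eulerModCoeff f j) (u t) (f (u t))) s t :=
      (hdiff.hasFDerivAt.comp_hasDerivWithinAt t (hu t ht)).const_smul _
    rw [iteratedDerivWithin_succ, derivWithin_congr hprev (hprev ht),
      hderiv.derivWithin (hs t ht), eulerModCoeff, smul_smul, Nat.factorial_succ (j + 1)]
    congr 1
    push_cast
    field_simp
    ring

theorem taylorWithinEval_eq_add_smul_eulerModField (hs : UniqueDiffOn ℝ s) (hf : ContDiff ℝ k f)
    (hu : IsIntegralCurveOn u (fun _ ↦ f) s) {a : ℝ} (ha : a ∈ s) (h : ℝ) :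
    taylorWithinEval u k s a (a + h) = u a + h • eulerModField f k h (u a) := by
  rw [taylor_within_apply, Finset.sum_range_succ', add_comm, eulerModField, Finset.smul_sum,
    add_sub_cancel_left]
  congr 1
  · simp
  · refine Finset.sum_congr rfl fun j hj ↦ ?_
    have hjk : j ≤ k := (Finset.mem_range.1 hj).le
    rw [iteratedDerivWithin_succ_eq_factorial_smul_eulerModCoeff hs hu
      (hf.of_le (mod_cast hjk)) ha, smul_smul, smul_smul]
    congr 1
    field_simp
    ring

theorem norm_sub_add_smul_eulerModField_le (hf : ContDiff ℝ k f) {a h M : ℝ} (hh : 0 < h)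
    (hu : IsIntegralCurveOn u (fun _ ↦ f) (Icc a (a + h)))
    (hM : ∀ t ∈ Icc a (a + h), ‖eulerModCoeff f k (u t)‖ ≤ M) :
    ‖u (a + h) - (u a + h • eulerModField f k h (u a))‖ ≤ (k + 1) * M * h ^ (k + 1) := by
  have hlt : a < a + h := lt_add_of_pos_right a hh
  have hs := uniqueDiffOn_Icc hlt
  have hderiv : ∀ t ∈ Icc a (a + h),
      ‖iteratedDerivWithin (k + 1) u (Icc a (a + h)) t‖ ≤ (k + 1)! * M := by
    intro t ht
    rw [iteratedDerivWithin_succ_eq_factorial_smul_eulerModCoeff hs hu hf ht, norm_smul,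
      Real.norm_natCast]
    gcongr
    exact hM t ht
  rw [← taylorWithinEval_eq_add_smul_eulerModField hs hf hu (Set.left_mem_Icc.2 hlt.le)]
  calc _ ≤ (k + 1)! * M * (a + h - a) ^ (k + 1) / k ! :=
        taylor_mean_remainder_bound hlt.le (contDiffOn_succ_of_isIntegralCurveOn hs hf hu)
          (Set.right_mem_Icc.2 hlt.le) hderiv
    _ = (k + 1) * M * h ^ (k + 1) := by
        rw [Nat.factorial_succ, add_sub_cancel_left]
        push_cast
        field_simp

theorem norm_sub_le_of_modifiedEuler (hf : ContDiff ℝ k f) {h M T : ℝ} (hh : 0 < h) {L : ℝ≥0}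
    (hL : LipschitzWith L (eulerModField f k h)) (hM : ∀ y, ‖eulerModCoeff f k y‖ ≤ M)
    (hu : IsIntegralCurveOn u (fun _ ↦ f) (Icc 0 T)) {y : ℕ → E} (hy0 : y 0 = u 0) {n : ℕ}
    (hn : n * h ≤ T) (hy : ∀ m < n, y (m + 1) = y m + h • eulerModField f k h (y m)) :
    ‖y n - u (n * h)‖ ≤ T * ((k + 1) * M) * Real.exp (T * L) * h ^ k := by
  have hM0 : 0 ≤ M := (norm_nonneg _).trans (hM 0)
  have hT : 0 ≤ T := le_trans (by positivity) hn
  have hlocal : ∀ m < n, ‖u ((m + 1 : ℕ) * h) -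
      (u (m * h) + h • eulerModField f k h (u (m * h)))‖ ≤ (k + 1) * M * h ^ (k + 1) := by
    intro m hm
    have hnext : ((m + 1 : ℕ) : ℝ) * h = m * h + h := by push_cast; ring
    have hend : m * h + h ≤ T := hnext ▸ le_trans (by gcongr; exact hm) hn
    rw [hnext]
    exact norm_sub_add_smul_eulerModField_le hf hh
      (hu.mono (Set.Icc_subset_Icc (by positivity) hend)) fun t _ ↦ hM (u t)
  calc ‖y n - u (n * h)‖
      ≤ (‖y 0 - u ((0 : ℕ) * h)‖ + n * ((k + 1) * M * h ^ (k + 1))) * Real.exp (n * (h * L)) :=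
        norm_sub_le_of_oneStep_of_localError_le (x := fun m : ℕ ↦ u (m * h)) hL hh.le
          (by positivity) hy hlocal
    _ = n * h * ((k + 1) * M) * Real.exp (n * h * L) * h ^ k := by
        rw [hy0, Nat.cast_zero, zero_mul, sub_self, norm_zero, ← mul_assoc (n : ℝ) h]
        ring
    _ ≤ T * ((k + 1) * M) * Real.exp (T * L) * h ^ k := by gcongr

theorem stmt15_general (hf : ContDiffBounded k f) (T : ℝ) :
    ∃ C : ℝ, 0 < C ∧ ∀ (h : ℝ) (n : ℕ), 0 < h → n * h ≤ T →
      ∀ u : ℝ → E, IsIntegralCurveOn u (fun _ ↦ f) (Icc 0 T) →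
        ∀ y : ℕ → E, y 0 = u 0 →
          (∀ m < n, y (m + 1) = y m + h • eulerModField f k h (y m)) →
          ‖y n - u (n * h)‖ ≤ C * h ^ k := by
  obtain ⟨M, hM⟩ := (contDiffBounded_eulerModCoeff (hf.of_le (zero_add k).le)).exists_norm_le
  obtain ⟨L, hL⟩ := hf.exists_lipschitzWith_eulerModField T
  refine ⟨max 1 (T * ((k + 1) * M) * Real.exp (T * L)), by positivity, ?_⟩
  intro h n hh hn u hu y hy0 hy
  rcases n.eq_zero_or_pos with rfl | hpos
  · simp only [hy0, Nat.cast_zero, zero_mul, sub_self, norm_zero]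
    positivity
  have hhT : h ≤ T := (le_mul_of_one_le_left hh.le (mod_cast hpos)).trans hn
  refine (norm_sub_le_of_modifiedEuler hf.contDiff hh (hL h ⟨hh.le, hhT⟩) hM hu hy0 hn hy).trans ?_
  gcongr
  exact le_max_right _ _

end ModifiedEuler

/-- Forward Euler applied to the truncated modified field
`f̃_h^k = f + ∑_{j=1}^{k−1} h^j f^{[j]}` (the "modified Euler" method) is a
method of order `k`. -/
theorem stmt15
    (d : ℕ) (k : ℕ) (hk : 1 ≤ k)
    (f : EuclideanSpace ℝ (Fin d) → EuclideanSpace ℝ (Fin d))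
    (hf : ContDiff ℝ (k + 1 : ℕ) f)
    (hbd : ∀ i : ℕ, i ≤ k + 1 → ∃ M : ℝ, ∀ y, ‖iteratedFDeriv ℝ i f y‖ ≤ M)
    (φ : ℝ → EuclideanSpace ℝ (Fin d) → EuclideanSpace ℝ (Fin d))
    (hφ0 : ∀ y, φ 0 y = y)
    (hφ : ∀ (t : ℝ) (y : EuclideanSpace ℝ (Fin d)),
      HasDerivAt (fun s => φ s y) (f (φ t y)) t)
    (T : ℝ) (hT : 0 < T)
    (K : Set (EuclideanSpace ℝ (Fin d))) (hK : IsCompact K) :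
    ∃ C h₀ : ℝ, 0 < C ∧ 0 < h₀ ∧
      ∀ (h : ℝ) (N : ℕ), 0 < h → h ≤ h₀ → (N : ℝ) * h = T →
        ∀ y₀ ∈ K, (∀ t ∈ Set.Icc (0 : ℝ) T, φ t y₀ ∈ K) →
          ∀ yseq : ℕ → EuclideanSpace ℝ (Fin d), yseq 0 = y₀ →
            (∀ n < N, yseq (n + 1) = yseq n + h • (f (yseq n) +
              ∑ j ∈ Finset.Icc 1 (k - 1), h ^ j • eulerModCoeff f j (yseq n))) →
            ∀ n ≤ N, ‖yseq n - φ (n * h) y₀‖ ≤ C * h ^ k := by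
  obtain ⟨C, hC, hbound⟩ :=
    stmt15_general (ContDiffBounded.of_le ⟨hf, hbd⟩ k.le_succ) T
  refine ⟨C, 1, hC, one_pos, fun h N hh _ hN y₀ _ _ y hy0 hy n hn ↦ ?_⟩
  exact hbound h n hh (hN ▸ by gcongr) (φ · y₀) (fun t _ ↦ (hφ t y₀).hasDerivWithinAt) y
    (hy0.trans (hφ0 y₀).symm) fun m hm ↦ by
      rw [hy m (hm.trans_le hn), eulerModField_eq_add_sum_Icc f hk]
end

section
/- Let f : ℝ^d → ℝ^d be of class C⁴ with all derivatives up to order 4 bounded, with flow φ_t^f, and define f^{[1]}(y) = (1/24) d(df·f)(y)·f(y) + (1/8) df(y)·(df(y)·f(y)). Let Φ_h^g(y) = y + h g(y + (h/2) g(y)) be the explicit midpoint Runge-Kutta 2 method. Then for every compact K ⊂ ℝ^d there exist C > 0 and h₀ > 0 such that for all 0 < h ≤ h₀ and all y ∈ K, |φ_h^f(y) − Φ_h^{f + h² f^{[1]}}(y)| ≤ C h⁴; i.e., RK2 applied to the once-corrected modified field f + h² f^{[1]} has local error of order 4. -/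
/-- The first correction term of the modified field for the explicit midpoint
Runge-Kutta 2 method: `f^{[1]} = (1/24) d(df·f)·f + (1/8) (df)² f`. -/
noncomputable def rk2Corr1 {E : Type*} [NormedAddCommGroup E] [NormedSpace ℝ E]
    (f : E → E) (y : E) : E :=
  (24 : ℝ)⁻¹ • fderiv ℝ (fun z => fderiv ℝ f z (f z)) y (f y) +
    (8 : ℝ)⁻¹ • fderiv ℝ f y (fderiv ℝ f y (f y))

/-!
Write `L g = dg·f` for the derivative along `f`. Along the flow, `φ_h(y)` is the truncated Lie
series `y + h f + h²/2 L f + h³/6 L² f` up to `O(h⁴)`, and `L² f = f''(f, f) + f'f'f`. Expanding `f`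
at `y + (h/2) f(y)` to second order, a midpoint step for `f` has `h³`-coefficient `f''(f, f) / 8`,
which differs from that of the flow by exactly `f^{[1]}`. In the corrected step `h² f^{[1]}`
supplies this difference, up to evaluating it `O(h)` away from `y` and moving the inner stage by
`O(h³)`; both effects cost `O(h⁴)`. All estimates are uniform for `y ∈ K` because a continuous
function is bounded near a compact set, and integral curves starting in `K` stay near `K` for a
short time.
-/

open Set Filter Topology Metric Asymptotics

section Asymptotics

variable {X G : Type*} [SeminormedAddCommGroup G]

theorem isBigO_fst_pow_nhdsGT_prod_principal_iff {S : Set X} {n : ℕ} {e : ℝ × X → G} :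
    (e =O[𝓝[>] 0 ×ˢ 𝓟 S] fun p => p.1 ^ n) ↔
      ∃ C h₀ : ℝ, 0 < C ∧ 0 < h₀ ∧ ∀ h, 0 < h → h ≤ h₀ → ∀ y ∈ S, ‖e (h, y)‖ ≤ C * h ^ n := by
  simp only [isBigO_iff', eventually_prod_principal_iff, (nhdsGT_basis_Ioc (0 : ℝ)).eventually_iff]
  constructor
  · rintro ⟨C, hC, h₀, hh₀, hbound⟩
    refine ⟨C, h₀, hC, hh₀, fun h hpos hle y hy => ?_⟩
    simpa [abs_of_pos hpos] using hbound ⟨hpos, hle⟩ y hy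
  · rintro ⟨C, h₀, hC, hh₀, hbound⟩
    refine ⟨C, hC, h₀, hh₀, fun h hh y hy => ?_⟩
    simpa [abs_of_pos hh.1] using hbound h hh.1 hh.2 y hy

theorem comp_snd_isBigO_one [TopologicalSpace X] {S : Set X} (hS : IsCompact S) {g : X → G}
    (hg : Continuous g) {Y : Type*} (l : Filter Y) :
    (fun p : Y × X => g p.2) =O[l ×ˢ 𝓟 S] fun _ => (1 : ℝ) :=
  (hg.continuousOn.isBigO_principal hS (c := (1 : ℝ)) (by simp)).comp_tendsto tendsto_snd

theorem div_two_smul_isBigO [NormedSpace ℝ G] {l : Filter X} {a : X → ℝ} {u : X → G}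
    (hu : u =O[l] fun _ => (1 : ℝ)) : (fun x => (a x / 2) • u x) =O[l] a := by
  simpa [div_eq_inv_mul] using ((isBigO_refl a l).const_mul_left 2⁻¹).smul hu

theorem exists_eventually_norm_le_nhdsSet [TopologicalSpace X] {S : Set X} (hS : IsCompact S)
    {g : X → G} (hg : Continuous g) : ∃ C, ∀ᶠ x in 𝓝ˢ S, ‖g x‖ ≤ C := by
  obtain ⟨C, hC⟩ := hS.exists_bound_of_continuousOn hg.continuousOn
  have hopen : IsOpen {x | ‖g x‖ < C + 1} := isOpen_lt hg.norm continuous_const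
  have hmem : {x | ‖g x‖ < C + 1} ∈ 𝓝ˢ S :=
    hopen.mem_nhdsSet.2 fun x hx => (hC x hx).trans_lt (lt_add_one C)
  exact ⟨C + 1, mem_of_superset hmem fun x (hx : ‖g x‖ < C + 1) => hx.le⟩

end Asymptotics

variable {E F : Type*} [NormedAddCommGroup E] [NormedSpace ℝ E]
  [NormedAddCommGroup F] [NormedSpace ℝ F]

/-- The derivative of `g` along the vector field `v`, that is `dg·v`. Its iterates are the
coefficients of the expansion of `g` along the integral curves of `v`. -/
noncomputable def lieDeriv (v : E → E) (g : E → F) : E → F :=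
  fun z => fderiv ℝ g z (v z)

/-- One step of size `h` of the explicit midpoint (Runge-Kutta 2) method `Φ_h^g`, for the
field `g`. -/
noncomputable def midpointStep (h : ℝ) (g : E → E) (y : E) : E :=
  y + h • g (y + (h / 2) • g y)

section IteratedDerivative

variable {u : ℕ → ℝ → F} {s : Set ℝ} {n : ℕ}

theorem eqOn_iteratedDerivWithin_of_hasDerivWithinAt (hs : UniqueDiffOn ℝ s)
    (hu : ∀ k < n, ∀ t ∈ s, HasDerivWithinAt (u k) (u (k + 1) t) s t) :
    ∀ k ≤ n, EqOn (iteratedDerivWithin k (u 0) s) (u k) s := by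
  intro k hk
  induction k with
  | zero => simp [EqOn]
  | succ k ih =>
    intro t ht
    rw [iteratedDerivWithin_succ, derivWithin_congr (ih (by lia)) (ih (by lia) ht)]
    exact (hu k hk t ht).derivWithin (hs t ht)

theorem contDiffOn_of_hasDerivWithinAt (hs : UniqueDiffOn ℝ s)
    (hu : ∀ k < n, ∀ t ∈ s, HasDerivWithinAt (u k) (u (k + 1) t) s t)
    (hn : ContinuousOn (u n) s) : ContDiffOn ℝ n (u 0) s := by
  have heq := eqOn_iteratedDerivWithin_of_hasDerivWithinAt hs hu
  refine (contDiffOn_nat_iff_continuousOn_differentiableOn_deriv hs).2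
    ⟨fun k hk => ?_, fun k hk => ?_⟩
  · refine ContinuousOn.congr ?_ (heq k hk)
    rcases hk.lt_or_eq with hlt | rfl
    · exact fun t ht => (hu k hlt t ht).continuousWithinAt
    · exact hn
  · exact DifferentiableOn.congr (fun t ht => (hu k hk t ht).differentiableWithinAt) (heq k hk.le)

theorem norm_sub_sum_pow_smul_le_of_hasDerivWithinAt {T C t : ℝ} (hT : 0 < T)
    (hu : ∀ k < n + 1, ∀ τ ∈ Icc 0 T, HasDerivWithinAt (u k) (u (k + 1) τ) (Icc 0 T) τ)
    (hcont : ContinuousOn (u (n + 1)) (Icc 0 T)) (hC : ∀ τ ∈ Icc 0 T, ‖u (n + 1) τ‖ ≤ C)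
    (ht : t ∈ Icc 0 T) :
    ‖u 0 t - ∑ k ∈ Finset.range (n + 1), ((k.factorial : ℝ)⁻¹ * t ^ k) • u k 0‖ ≤
      C * t ^ (n + 1) / n.factorial := by
  have hs := uniqueDiffOn_Icc hT
  have heq := eqOn_iteratedDerivWithin_of_hasDerivWithinAt hs hu
  have hbound := taylor_mean_remainder_bound hT.le
    (mod_cast contDiffOn_of_hasDerivWithinAt hs hu hcont) ht
    fun τ hτ => (congrArg norm (heq (n + 1) le_rfl hτ)).trans_le (hC τ hτ)
  have hsum : taylorWithinEval (u 0) n (Icc 0 T) 0 t =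
      ∑ k ∈ Finset.range (n + 1), ((k.factorial : ℝ)⁻¹ * t ^ k) • u k 0 := by
    rw [taylor_within_apply]
    refine Finset.sum_congr rfl fun k hk => ?_
    rw [sub_zero, heq k (Finset.mem_range.1 hk).le (left_mem_Icc.2 hT.le)]
  rwa [hsum, sub_zero] at hbound

end IteratedDerivative

section LieDerivative

variable {v : E → E} {g : E → F} {n : ℕ}

theorem contDiff_iterate_lieDeriv (hv : ContDiff ℝ n v) (hg : ContDiff ℝ (n + 1) g) {m k : ℕ}
    (hmk : m + k ≤ n + 1) : ContDiff ℝ m ((lieDeriv v)^[k] g) := by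
  induction k generalizing m with
  | zero => exact hg.of_le (mod_cast hmk)
  | succ k ih =>
    rw [Function.iterate_succ_apply']
    have hiter : ContDiff ℝ (m + 1) ((lieDeriv v)^[k] g) := mod_cast ih (by lia)
    exact (hiter.fderiv_right le_rfl).clm_apply (hv.of_le (mod_cast (by lia : m ≤ n)))

theorem iterate_lieDeriv_const (hg : ContDiff ℝ n g) (w x : E) :
    (lieDeriv fun _ => w)^[n] g x = iteratedFDeriv ℝ n g x fun _ => w := by
  induction n generalizing x with
  | zero => simp
  | succ n ih =>
    have hdiff : DifferentiableAt ℝ (iteratedFDeriv ℝ n g) x :=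
      (hg.differentiable_iteratedFDeriv (mod_cast n.lt_succ_self)).differentiableAt
    rw [Function.iterate_succ_apply', hdiff.iteratedFDeriv_succ_apply_left', lieDeriv,
      funext (ih (hg.of_le (mod_cast n.le_succ)))]
    rfl

theorem norm_comp_integralCurve_sub_lieSeries_le {γ : ℝ → E} {T C t : ℝ} (hT : 0 < T)
    (hγ : IsIntegralCurveOn γ (fun _ => v) (Icc 0 T)) (hv : ContDiff ℝ n v)
    (hg : ContDiff ℝ (n + 1) g) (hC : ∀ τ ∈ Icc 0 T, ‖(lieDeriv v)^[n + 1] g (γ τ)‖ ≤ C)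
    (ht : t ∈ Icc 0 T) :
    ‖g (γ t) -
        ∑ k ∈ Finset.range (n + 1), ((k.factorial : ℝ)⁻¹ * t ^ k) • (lieDeriv v)^[k] g (γ 0)‖ ≤
      C * t ^ (n + 1) / n.factorial := by
  refine norm_sub_sum_pow_smul_le_of_hasDerivWithinAt
    (u := fun k τ => (lieDeriv v)^[k] g (γ τ)) hT (fun k hk τ hτ => ?_) ?_ hC ht
  · have hdiff : Differentiable ℝ ((lieDeriv v)^[k] g) :=
      (contDiff_iterate_lieDeriv (m := 1) hv hg (by lia)).differentiable (by norm_num)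
    rw [Function.iterate_succ_apply']
    exact (hdiff (γ τ)).hasFDerivAt.comp_hasDerivWithinAt τ (hγ τ hτ)
  · exact (contDiff_iterate_lieDeriv (m := 0) hv hg (by lia)).continuous.comp_continuousOn
      hγ.continuousOn

theorem isIntegralCurveOn_add_smul (x w : E) (s : Set ℝ) :
    IsIntegralCurveOn (fun t => x + t • w) (fun _ _ => w) s := fun t _ => by
  simpa using (((hasDerivAt_id t).smul_const w).const_add x).hasDerivWithinAt

theorem norm_map_add_sub_sum_iteratedFDeriv_le {C : ℝ} (hg : ContDiff ℝ (n + 1) g) (x w : E)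
    (hC : ∀ t ∈ Icc (0 : ℝ) 1, ‖iteratedFDeriv ℝ (n + 1) g (x + t • w)‖ ≤ C) :
    ‖g (x + w) -
        ∑ k ∈ Finset.range (n + 1), (k.factorial : ℝ)⁻¹ • iteratedFDeriv ℝ k g x fun _ => w‖ ≤
      C / n.factorial * ‖w‖ ^ (n + 1) := by
  have hbound := norm_comp_integralCurve_sub_lieSeries_le (t := 1) (C := C * ‖w‖ ^ (n + 1))
    one_pos (isIntegralCurveOn_add_smul x w _) contDiff_const hg
    (fun t ht => by
      rw [iterate_lieDeriv_const (mod_cast hg)]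
      exact (ContinuousMultilinearMap.le_of_opNorm_le (hC t ht) _).trans_eq (by simp))
    (right_mem_Icc.2 zero_le_one)
  have hsum : ∑ k ∈ Finset.range (n + 1),
        ((k.factorial : ℝ)⁻¹ * 1 ^ k) • (lieDeriv fun _ => w)^[k] g (x + (0 : ℝ) • w) =
      ∑ k ∈ Finset.range (n + 1), (k.factorial : ℝ)⁻¹ • iteratedFDeriv ℝ k g x fun _ => w := by
    refine Finset.sum_congr rfl fun k hk => ?_
    have hk' : k ≤ n + 1 := (Finset.mem_range.1 hk).le
    rw [one_pow, mul_one, zero_smul, add_zero, iterate_lieDeriv_const (hg.of_le (mod_cast hk'))]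
  rw [hsum, one_smul] at hbound
  exact hbound.trans_eq (by ring)

end LieDerivative

section NearCompact

variable {K : Set E} {n : ℕ}

theorem eventually_forall_add_smul_mem_of_tendsto (hK : IsCompact K) {U : Set E} (hU : U ∈ 𝓝ˢ K)
    {ι : Type*} {l : Filter ι} {x w : ι → E} (hx : Tendsto x l (𝓝ˢ K))
    (hw : Tendsto w l (𝓝 0)) :
    ∀ᶠ i in l, ∀ t ∈ Icc (0 : ℝ) 1, x i + t • w i ∈ U := by
  obtain ⟨r, hr, hrU⟩ := (hasBasis_nhdsSet_thickening hK).mem_iff.1 hU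
  filter_upwards [hx (thickening_mem_nhdsSet K (half_pos hr)),
    hw (ball_mem_nhds 0 (half_pos hr))] with i hxi hwi t ht
  obtain ⟨y, hyK, hxy⟩ := mem_thickening_iff.1 hxi
  refine hrU (mem_thickening_iff.2 ⟨y, hyK, ?_⟩)
  have htw : ‖t • w i‖ < r / 2 := by
    rw [norm_smul, Real.norm_of_nonneg ht.1]
    exact (mul_le_of_le_one_left (norm_nonneg _) ht.2).trans_lt (mem_ball_zero_iff.1 hwi)
  calc dist (x i + t • w i) y ≤ dist (x i + t • w i) (x i) + dist (x i) y := dist_triangle _ _ _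
    _ < r / 2 + r / 2 := by rw [dist_self_add_left]; gcongr
    _ = r := add_halves r

theorem tendsto_add_nhdsSet (hK : IsCompact K) {ι : Type*} {l : Filter ι} {x w : ι → E}
    (hx : Tendsto x l (𝓝ˢ K)) (hw : Tendsto w l (𝓝 0)) :
    Tendsto (fun i => x i + w i) l (𝓝ˢ K) := fun U hU =>
  (eventually_forall_add_smul_mem_of_tendsto hK hU hx hw).mono fun i hi => by
    simpa using hi 1 (right_mem_Icc.2 zero_le_one)

theorem map_add_sub_sum_iteratedFDeriv_isBigO (hK : IsCompact K) {g : E → F}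
    (hg : ContDiff ℝ (n + 1) g) {ι : Type*} {l : Filter ι} {x w : ι → E}
    (hx : Tendsto x l (𝓝ˢ K)) (hw : Tendsto w l (𝓝 0)) :
    (fun i => g (x i + w i) - ∑ k ∈ Finset.range (n + 1),
        (k.factorial : ℝ)⁻¹ • iteratedFDeriv ℝ k g (x i) fun _ => w i)
      =O[l] fun i => ‖w i‖ ^ (n + 1) := by
  obtain ⟨C, hC⟩ := exists_eventually_norm_le_nhdsSet hK
    (hg.continuous_iteratedFDeriv (m := n + 1) le_rfl)
  refine IsBigO.of_bound (C / n.factorial) ?_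
  filter_upwards [eventually_forall_add_smul_mem_of_tendsto hK hC hx hw] with i hi
  rw [norm_pow, norm_norm]
  exact norm_map_add_sub_sum_iteratedFDeriv_le hg (x i) (w i) hi

theorem map_add_sub_map_isBigO (hK : IsCompact K) {g : E → F} (hg : ContDiff ℝ 1 g)
    {ι : Type*} {l : Filter ι} {x w : ι → E} (hx : Tendsto x l (𝓝ˢ K))
    (hw : Tendsto w l (𝓝 0)) : (fun i => g (x i + w i) - g (x i)) =O[l] w := by
  simpa using map_add_sub_sum_iteratedFDeriv_isBigO (n := 0) hK (by simpa using hg) hx hw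

end NearCompact

section Flow

variable {K : Set E} {v : E → E} {n : ℕ} {T : ℝ}

-- Fencing: at a time `τ` with `‖γ τ - γ 0‖ = M' * τ` the curve is still in the ball, where its
-- speed is below `M'`, so it cannot leave the cone.
theorem norm_integralCurve_sub_le {γ : ℝ → E} {r M M' : ℝ}
    (hγ : IsIntegralCurveOn γ (fun _ => v) (Icc 0 T))
    (hM : ∀ x ∈ closedBall (γ 0) r, ‖v x‖ ≤ M) (hMM' : M < M') (hM' : 0 ≤ M')
    (hr : M' * T ≤ r) {t : ℝ} (ht : t ∈ Icc 0 T) : ‖γ t - γ 0‖ ≤ M' * t := by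
  refine image_norm_le_of_norm_deriv_right_lt_deriv_boundary (f := fun τ => γ τ - γ 0)
    (f' := fun τ => v (γ τ))
    (B := fun τ => M' * τ) (B' := fun _ => M') (hγ.continuousOn.sub continuousOn_const)
    (fun τ hτ => ?_) (by simp) (fun τ => by simpa using (hasDerivAt_id τ).const_mul M')
    (fun τ hτ hτeq => ?_) ht
  · exact ((hγ τ (Ico_subset_Icc_self hτ)).sub_const _).mono_of_mem_nhdsWithin
      (mem_of_superset (Icc_mem_nhdsGE hτ.2) (Icc_subset_Icc_left hτ.1))
  · refine (hM _ (mem_closedBall_iff_norm.2 ?_)).trans_lt hMM'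
    exact hτeq.trans_le ((mul_le_mul_of_nonneg_left hτ.2.le hM').trans hr)

theorem exists_integralCurves_mem_nhdsSet (hK : IsCompact K) (hv : Continuous v) (hT : 0 < T)
    {φ : ℝ → E → E} (hφ0 : ∀ y ∈ K, φ 0 y = y)
    (hφ : ∀ y ∈ K, IsIntegralCurveOn (fun t => φ t y) (fun _ => v) (Icc 0 T))
    {U : Set E} (hU : U ∈ 𝓝ˢ K) :
    ∃ h₀ > 0, h₀ ≤ T ∧ ∀ y ∈ K, ∀ t ∈ Icc 0 h₀, φ t y ∈ U := by
  obtain ⟨M, hM⟩ := exists_eventually_norm_le_nhdsSet hK hv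
  obtain ⟨r, hr, hrU⟩ := (hasBasis_nhdsSet_cthickening hK).mem_iff.1 (inter_mem hU hM)
  have hM' : 0 < |M| + 1 := by positivity
  refine ⟨min T (r / (|M| + 1)), by positivity, min_le_left _ _, fun y hy t ht => ?_⟩
  have hball : closedBall (φ 0 y) r ⊆ U ∩ {x | ‖v x‖ ≤ M} := by
    rw [hφ0 y hy]
    exact (closedBall_subset_cthickening hy r).trans hrU
  have hradius : (|M| + 1) * min T (r / (|M| + 1)) ≤ r :=
    (mul_le_mul_of_nonneg_left (min_le_right _ _) hM'.le).trans_eq (mul_div_cancel₀ r hM'.ne')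
  have hdist := norm_integralCurve_sub_le ((hφ y hy).mono (Icc_subset_Icc_right (min_le_left _ _)))
    (fun x hx => (hball hx).2) ((le_abs_self M).trans_lt (lt_add_one _)) hM'.le hradius ht
  exact (hball (mem_closedBall_iff_norm.2
    (hdist.trans ((mul_le_mul_of_nonneg_left ht.2 hM'.le).trans hradius)))).1

theorem comp_flow_sub_lieSeries_isBigO (hK : IsCompact K) (hv : ContDiff ℝ n v) {g : E → F}
    (hg : ContDiff ℝ (n + 1) g) (hT : 0 < T) {φ : ℝ → E → E} (hφ0 : ∀ y ∈ K, φ 0 y = y)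
    (hφ : ∀ y ∈ K, IsIntegralCurveOn (fun t => φ t y) (fun _ => v) (Icc 0 T)) :
    (fun p : ℝ × E => g (φ p.1 p.2) -
        ∑ k ∈ Finset.range (n + 1), ((k.factorial : ℝ)⁻¹ * p.1 ^ k) • (lieDeriv v)^[k] g p.2)
      =O[𝓝[>] 0 ×ˢ 𝓟 K] fun p => p.1 ^ (n + 1) := by
  obtain ⟨C, hC⟩ := exists_eventually_norm_le_nhdsSet hK
    (contDiff_iterate_lieDeriv (m := 0) (k := n + 1) hv hg (by lia)).continuous
  obtain ⟨h₀, hh₀, hh₀T, hmem⟩ := exists_integralCurves_mem_nhdsSet hK hv.continuous hT hφ0 hφ hC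
  refine isBigO_fst_pow_nhdsGT_prod_principal_iff.2
    ⟨max C 1 / n.factorial, h₀, by positivity, hh₀, fun h hpos hle y hy => ?_⟩
  have hbound := norm_comp_integralCurve_sub_lieSeries_le hh₀
    ((hφ y hy).mono (Icc_subset_Icc_right hh₀T)) hv hg
    (fun t ht => (hmem y hy t ht).trans (le_max_left C 1)) ⟨hpos.le, hle⟩
  rw [hφ0 y hy] at hbound
  exact hbound.trans_eq (by ring)

end Flow

section Midpoint

variable {f : E → E}

theorem rk2Corr1_eq_lieDeriv (f : E → E) (y : E) :
    rk2Corr1 f y = (24 : ℝ)⁻¹ • lieDeriv f (lieDeriv f f) y +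
      (8 : ℝ)⁻¹ • fderiv ℝ f y (lieDeriv f f y) :=
  rfl

theorem lieDeriv_id (v : E → E) : lieDeriv v id = v := by
  ext y
  simp [lieDeriv]

theorem lieDeriv_lieDeriv_self (hf : ContDiff ℝ 2 f) (y : E) :
    lieDeriv f (lieDeriv f f) y =
      iteratedFDeriv ℝ 2 f y (fun _ => f y) + fderiv ℝ f y (lieDeriv f f y) := by
  have hdf : DifferentiableAt ℝ (fderiv ℝ f) y :=
    (hf.fderiv_right (m := 1) (by norm_num)).differentiable (by norm_num) y
  have hfy : DifferentiableAt ℝ f y := hf.differentiable (by norm_num) y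
  have hprod := (hdf.hasFDerivAt.clm_apply hfy.hasFDerivAt).fderiv
  rw [lieDeriv, show lieDeriv f f = fun z => fderiv ℝ f z (f z) from rfl, hprod]
  simp [iteratedFDeriv_two_apply, add_comm]

theorem contDiff_rk2Corr1 (hf : ContDiff ℝ 3 f) : ContDiff ℝ 1 (rk2Corr1 f) := by
  have hf2 : ContDiff ℝ 2 f := hf.of_le (by norm_num)
  have hlie : ContDiff ℝ 2 (lieDeriv f f) := (hf.fderiv_right (by norm_num)).clm_apply hf2
  have hlie2 : ContDiff ℝ 1 (lieDeriv f (lieDeriv f f)) :=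
    (hlie.fderiv_right (by norm_num)).clm_apply (hf.of_le (by norm_num))
  have hdf : ContDiff ℝ 1 (fderiv ℝ f) := hf2.fderiv_right (by norm_num)
  exact (hlie2.const_smul _).add ((hdf.clm_apply (hlie.of_le (by norm_num))).const_smul _)

theorem lieSeries_id_three (hf : ContDiff ℝ 2 f) (h : ℝ) (y : E) :
    ∑ k ∈ Finset.range 4, ((k.factorial : ℝ)⁻¹ * h ^ k) • (lieDeriv f)^[k] id y =
      y + h • f y + (h ^ 2 / 2) • lieDeriv f f y +
        (h ^ 3 / 6) • (iteratedFDeriv ℝ 2 f y (fun _ => f y) + fderiv ℝ f y (lieDeriv f f y)) := by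
  rw [← lieDeriv_lieDeriv_self hf]
  simp only [Finset.sum_range_succ, Finset.sum_range_zero, Function.iterate_succ_apply,
    Function.iterate_zero_apply, lieDeriv_id, id, Nat.factorial]
  module

theorem sum_iteratedFDeriv_smul_self_two (f : E → E) (c : ℝ) (y : E) :
    ∑ k ∈ Finset.range 3, (k.factorial : ℝ)⁻¹ • iteratedFDeriv ℝ k f y (fun _ => c • f y) =
      f y + c • lieDeriv f f y + (c ^ 2 / 2) • iteratedFDeriv ℝ 2 f y (fun _ => f y) := by
  simp only [Finset.sum_range_succ, Finset.sum_range_zero, iteratedFDeriv_zero_apply,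
    iteratedFDeriv_one_apply, iteratedFDeriv_two_apply, map_smul, smul_apply,
    lieDeriv, Nat.factorial]
  module

-- Terms up to order `h³` cancel: since `f^{[1]} = f''(f, f) / 24 + f'f'f / 6`, the coefficient
-- `f''(f, f) / 8 + f^{[1]}` of `h³` in the method equals that of the flow.
theorem sub_midpointStep_eq (hf : ContDiff ℝ 2 f) (h : ℝ) (x y : E) :
    x - midpointStep h (fun z => f z + h ^ 2 • rk2Corr1 f z) y =
      (x - ∑ k ∈ Finset.range 4, ((k.factorial : ℝ)⁻¹ * h ^ k) • (lieDeriv f)^[k] id y) -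
      h • (f (y + (h / 2) • f y) - ∑ k ∈ Finset.range 3,
        (k.factorial : ℝ)⁻¹ • iteratedFDeriv ℝ k f y fun _ => (h / 2) • f y) -
      h • (f (y + (h / 2) • f y + (h ^ 3 / 2) • rk2Corr1 f y) - f (y + (h / 2) • f y)) -
      h ^ 3 • (rk2Corr1 f (y + ((h / 2) • f y + (h ^ 3 / 2) • rk2Corr1 f y)) - rk2Corr1 f y) := by
  have hstage : y + (h / 2) • (f y + h ^ 2 • rk2Corr1 f y) =
      y + (h / 2) • f y + (h ^ 3 / 2) • rk2Corr1 f y := by module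
  have hcorr : rk2Corr1 f y = (24 : ℝ)⁻¹ • iteratedFDeriv ℝ 2 f y (fun _ => f y) +
      (6 : ℝ)⁻¹ • fderiv ℝ f y (lieDeriv f f y) := by
    rw [rk2Corr1_eq_lieDeriv, lieDeriv_lieDeriv_self hf]
    module
  rw [midpointStep, hstage, lieSeries_id_three hf, sum_iteratedFDeriv_smul_self_two,
    ← add_assoc y]
  generalize f (y + (h / 2) • f y + (h ^ 3 / 2) • rk2Corr1 f y) = a
  generalize rk2Corr1 f (y + (h / 2) • f y + (h ^ 3 / 2) • rk2Corr1 f y) = b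
  rw [hcorr]
  module

theorem flow_sub_midpointStep_isBigO {K : Set E} (hK : IsCompact K) (hf : ContDiff ℝ 3 f)
    {T : ℝ} (hT : 0 < T) {φ : ℝ → E → E} (hφ0 : ∀ y ∈ K, φ 0 y = y)
    (hφ : ∀ y ∈ K, IsIntegralCurveOn (fun t => φ t y) (fun _ => f) (Icc 0 T)) :
    (fun p : ℝ × E => φ p.1 p.2 - midpointStep p.1 (fun z => f z + p.1 ^ 2 • rk2Corr1 f z) p.2)
      =O[𝓝[>] 0 ×ˢ 𝓟 K] fun p => p.1 ^ 4 := by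
  set l : Filter (ℝ × E) := 𝓝[>] 0 ×ˢ 𝓟 K
  have hcorr := contDiff_rk2Corr1 hf
  have hstep : Tendsto (fun p : ℝ × E => p.1) l (𝓝 0) :=
    (tendsto_fst (f := 𝓝[>] (0 : ℝ))).mono_right nhdsWithin_le_nhds
  have hbase : Tendsto (fun p : ℝ × E => p.2) l (𝓝ˢ K) :=
    tendsto_snd.mono_right principal_le_nhdsSet
  have hhalf : (fun p : ℝ × E => (p.1 / 2) • f p.2) =O[l] fun p => p.1 :=
    div_two_smul_isBigO (comp_snd_isBigO_one hK hf.continuous _)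
  have hshift : (fun p : ℝ × E => (p.1 ^ 3 / 2) • rk2Corr1 f p.2) =O[l] fun p => p.1 ^ 3 :=
    div_two_smul_isBigO (comp_snd_isBigO_one hK hcorr.continuous _)
  have hcube : (fun p : ℝ × E => p.1 ^ 3) =O[l] fun p => p.1 :=
    ((isLittleO_pow_id (by norm_num : 1 < 3)).comp_tendsto hstep).isBigO
  have hhalf0 := hhalf.trans_tendsto hstep
  have hshift0 := (hshift.trans hcube).trans_tendsto hstep
  have hflow := comp_flow_sub_lieSeries_isBigO (n := 3) hK hf contDiff_id hT hφ0 hφ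
  have htaylor := (map_add_sub_sum_iteratedFDeriv_isBigO (n := 2) hK
    (by exact_mod_cast hf) hbase hhalf0).trans (hhalf.norm_left.pow 3)
  have hfield := (map_add_sub_map_isBigO hK (hf.of_le (by norm_num))
    (tendsto_add_nhdsSet hK hbase hhalf0) hshift0).trans hshift
  have hcorrection := (map_add_sub_map_isBigO hK hcorr hbase
    (by simpa using hhalf0.add hshift0)).trans (hhalf.add (hshift.trans hcube))
  have hmul : ∀ {u : ℝ × E → E}, u =O[l] (fun p => p.1 ^ 3) →
      (fun p => p.1 • u p) =O[l] fun p => p.1 ^ 4 := fun hu => by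
    simpa [← pow_succ'] using (isBigO_refl (fun p : ℝ × E => p.1) l).smul hu
  have hmul3 := (isBigO_refl (fun p : ℝ × E => p.1 ^ 3) l).smul hcorrection
  simp only [smul_eq_mul, ← pow_succ] at hmul3
  simp only [sub_midpointStep_eq (hf.of_le (by norm_num : (2 : WithTop ℕ∞) ≤ 3))]
  exact ((hflow.sub (hmul htaylor)).sub (hmul hfield)).sub hmul3

end Midpoint

theorem stmt16_general {f : E → E} (hf : ContDiff ℝ 3 f) {K : Set E} (hK : IsCompact K)
    {T : ℝ} (hT : 0 < T) {φ : ℝ → E → E} (hφ0 : ∀ y ∈ K, φ 0 y = y)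
    (hφ : ∀ y ∈ K, IsIntegralCurveOn (fun t => φ t y) (fun _ => f) (Icc 0 T)) :
    ∃ C h₀ : ℝ, 0 < C ∧ 0 < h₀ ∧ ∀ h : ℝ, 0 < h → h ≤ h₀ → ∀ y ∈ K,
      ‖φ h y - midpointStep h (fun z => f z + h ^ 2 • rk2Corr1 f z) y‖ ≤ C * h ^ 4 :=
  isBigO_fst_pow_nhdsGT_prod_principal_iff.1 (flow_sub_midpointStep_isBigO hK hf hT hφ0 hφ)

/-- RK2 applied to the once-corrected modified field `f + h² f^{[1]}` has local
error of order 4. -/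
theorem stmt16
    (d : ℕ)
    (f : EuclideanSpace ℝ (Fin d) → EuclideanSpace ℝ (Fin d))
    (hf : ContDiff ℝ (4 : ℕ) f)
    (hbd : ∀ i : ℕ, i ≤ 4 → ∃ M : ℝ, ∀ y, ‖iteratedFDeriv ℝ i f y‖ ≤ M)
    (φ : ℝ → EuclideanSpace ℝ (Fin d) → EuclideanSpace ℝ (Fin d))
    (hφ0 : ∀ y, φ 0 y = y)
    (hφ : ∀ (t : ℝ) (y : EuclideanSpace ℝ (Fin d)),
      HasDerivAt (fun s => φ s y) (f (φ t y)) t) :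
    ∀ K : Set (EuclideanSpace ℝ (Fin d)), IsCompact K →
      ∃ C h₀ : ℝ, 0 < C ∧ 0 < h₀ ∧ ∀ h : ℝ, 0 < h → h ≤ h₀ → ∀ y ∈ K,
        ‖φ h y -
          (y + h • (fun z => f z + h ^ 2 • rk2Corr1 f z)
            (y + (h / 2) • (fun z => f z + h ^ 2 • rk2Corr1 f z) y))‖ ≤
          C * h ^ 4 := by
  exact fun K hK => stmt16_general (hf.of_le (by norm_num)) hK one_pos (fun y _ => hφ0 y)
    fun y _ => IsIntegralCurve.isIntegralCurveOn (fun t => hφ t y) _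
end
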